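/- Assume T is trace-class and μ-a.e. point of X is a Lebesgue point of f. Then for μ⊗μ-a.e. pair (x,y) ∈ X × X one has Σⱼ λⱼ⁺ (uⱼ⁺(x) - uⱼ⁺(y))² ≥ d(x,y)² (the left-hand side understood as an extended-real sum), i.e. ‖M(x) - M(y)‖²_{ℓ²} ≥ d(x,y)² μ⊗μ-almost everywhere. -/

import Mathlib

/-! Expanding the kernel as `k_T = ∑ λᵢ uᵢ ⊗ uᵢ` and polarizing,
`d(x,y)² = k_T(x,x) + k_T(y,y) - 2 k_T(x,y)`, so the claim reduces to two facts: off the diagonal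
the expansion holds `μ ⊗ μ`-almost everywhere, and on the diagonal `k_T(x,x) ≤ ∑ λᵢ uᵢ(x)²` for
`μ`-almost every `x`. Replacing `λᵢ` by `max λᵢ 0` then only increases
`∑ λᵢ (uᵢ(x) - uᵢ(y))²`.

*Off the diagonal.* By the trace-class hypothesis the series converges absolutely almost
everywhere, and its pointwise sum must be the `L²` limit `k_T` (`ae_eq_of_tendsto_sq`).

*On the diagonal* (`mdsKT_diag_le`). The diagonal is usually a null set, so averages are taken:
since `k_T` is continuous, its mean over `B_r(x) × B_r(x)` tends to `k_T(x,x)`. That mean equals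
`∑ λᵢ aᵢ(r)²`, with `aᵢ(r)` the mean of `uᵢ` over `B_r(x)`, and `aᵢ(r) → uᵢ(x)` when `λᵢ ≠ 0`
because `uᵢ` is then continuous. The terms are dominated by `|λᵢ|` times the mean of `uᵢ²`, whose
sum is the mean of `f` and converges to `f x = ∑ |λᵢ| uᵢ(x)²` at a Lebesgue point. Fatou's
inequality for the nonnegative differences (`limit_le_tsum`) gives the bound.
-/


open MeasureTheory Metric Filter Topology

noncomputable section

/-- The MDS kernel `k(x,y) = -(1/2) d(x,y)²`. -/
def mdsK {X : Type*} [MetricSpace X] (x y : X) : ℝ := -(1/2) * dist x y ^ 2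

/-- The centered MDS kernel. -/
def mdsKT {X : Type*} [MetricSpace X] [MeasurableSpace X] (μ : Measure X) (x y : X) : ℝ :=
  mdsK x y - (∫ y', mdsK x y' ∂μ) - (∫ x', mdsK x' y ∂μ) + ∫ x', ∫ y', mdsK x' y' ∂μ ∂μ

/-- `x` is a Lebesgue point of `f`: all balls around `x` have positive measure and the averages
of `f` over `B_r(x)` converge to `f(x)` as `r → 0⁺`. -/
def IsLebPoint {X : Type*} [MetricSpace X] [MeasurableSpace X]
    (μ : Measure X) (f : X → ℝ) (x : X) : Prop :=
  (∀ r > 0, 0 < μ (ball x r)) ∧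
  Tendsto (fun r : ℝ => (μ (ball x r)).toReal⁻¹ * ∫ y in ball x r, f y ∂μ)
    (𝓝[>] 0) (𝓝 (f x))

/-! ### Sums and averages -/

/-- Beppo Levi: a series of integrable functions with summable `L¹` norms converges absolutely
almost everywhere. -/
lemma ae_summable_of_summable_integral_norm {Y : Type*} [MeasurableSpace Y] {ν : Measure Y}
    {F : ℕ → Y → ℝ} (hF : ∀ i, Integrable (F i) ν)
    (hS : Summable fun i => ∫ y, ‖F i y‖ ∂ν) :
    ∀ᵐ y ∂ν, Summable fun i => F i y := by
  have h1 : ∫⁻ y, ∑' i, ‖F i y‖ₑ ∂ν ≠ ⊤ := by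
    rw [lintegral_tsum fun i => (hF i).1.enorm]
    have : ∀ i, ∫⁻ y, ‖F i y‖ₑ ∂ν = ‖∫ y, ‖F i y‖ ∂ν‖ₑ := by
      intro i
      rw [Real.enorm_of_nonneg (integral_nonneg fun y => norm_nonneg _),
        ofReal_integral_norm_eq_lintegral_enorm (hF i)]
    simp_rw [this]
    exact tsum_enorm_ne_top_iff_summable_norm.2 hS.norm
  filter_upwards [ae_lt_top' (AEMeasurable.tsum fun i => (hF i).1.enorm) h1] with y hy
  exact (tsum_enorm_ne_top_iff_summable_norm.1 hy.ne).of_norm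

/-- Averages of a continuous function over shrinking balls of positive measure converge to the
value at the centre. -/
lemma tendsto_ball_avg {Y : Type*} [MetricSpace Y] [MeasurableSpace Y] [BorelSpace Y]
    (ν : Measure Y) [IsFiniteMeasure ν] (g : Y → ℝ) (hg : Continuous g) (hgi : Integrable g ν)
    (y : Y) (hpos : ∀ r > 0, 0 < ν (ball y r)) :
    Tendsto (fun r : ℝ => (ν (ball y r)).toReal⁻¹ * ∫ z in ball y r, g z ∂ν)
      (𝓝[>] 0) (𝓝 (g y)) := by
  rw [Metric.tendsto_nhds]
  intro ε hε
  obtain ⟨δ, hδ, hδ'⟩ := Metric.continuousAt_iff.1 hg.continuousAt (ε / 2) (half_pos hε)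
  filter_upwards [Ioo_mem_nhdsGT hδ] with r hr
  have hm : 0 < (ν (ball y r)).toReal :=
    ENNReal.toReal_pos (hpos r hr.1).ne' (measure_ne_top _ _)
  have h1 : ‖∫ z in ball y r, (g z - g y) ∂ν‖ ≤ ε / 2 * ν.real (ball y r) := by
    apply norm_setIntegral_le_of_norm_le_const (measure_lt_top _ _)
    intro z hz
    exact (hδ' (lt_trans (mem_ball.1 hz) hr.2)).le
  rw [integral_sub hgi.integrableOn (integrable_const _)] at h1
  simp only [integral_const, smul_eq_mul, measureReal_restrict_apply_univ] at h1
  rw [Measure.real] at h1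
  set m := (ν (ball y r)).toReal
  set I := ∫ z in ball y r, g z ∂ν
  have h2 : m⁻¹ * I - g y = m⁻¹ * (I - m * g y) := by field_simp
  rw [Real.dist_eq, h2, abs_mul, abs_of_pos (inv_pos.2 hm)]
  have : m⁻¹ * |I - m * g y| ≤ m⁻¹ * (ε / 2 * m) :=
    mul_le_mul_of_nonneg_left h1 (inv_pos.2 hm).le
  have h3 : m⁻¹ * (ε / 2 * m) = ε / 2 := by field_simp
  linarith

/-- The square of an average is at most the average of the square. -/
lemma sq_avg_le {Y : Type*} [MeasurableSpace Y] (ν : Measure Y) [IsFiniteMeasure ν]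
    (g : Y → ℝ) (hg : MemLp g 2 ν) (B : Set Y) (hB : 0 < ν B) :
    ((ν B).toReal⁻¹ * ∫ z in B, g z ∂ν) ^ 2 ≤ (ν B).toReal⁻¹ * ∫ z in B, g z ^ 2 ∂ν := by
  have hm : 0 < (ν B).toReal := ENNReal.toReal_pos hB.ne' (measure_ne_top _ _)
  have hgi : Integrable g ν := hg.integrable (by norm_num)
  set m := (ν B).toReal with hmdef
  set c := m⁻¹ * ∫ z in B, g z ∂ν with hc
  have h0 : 0 ≤ ∫ z in B, (g z - c) ^ 2 ∂ν := integral_nonneg fun z => sq_nonneg _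
  have h1 : ∫ z in B, (g z - c) ^ 2 ∂ν
      = (∫ z in B, g z ^ 2 ∂ν) - 2 * c * (∫ z in B, g z ∂ν) + m * c ^ 2 := by
    have : ∀ z, (g z - c) ^ 2 = g z ^ 2 - 2 * c * g z + c ^ 2 := fun z => by ring
    simp_rw [this]
    rw [integral_add, integral_sub, integral_const_mul, integral_const]
    · simp [Measure.real, hmdef]
    · exact hg.integrable_sq.integrableOn
    · exact (hgi.const_mul _).integrableOn
    · exact (hg.integrable_sq.sub (hgi.const_mul _)).integrableOn
    · exact integrable_const _
  have h2 : ∫ z in B, g z ∂ν = m * c := by rw [hc]; field_simp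
  rw [h1, h2] at h0
  have h3 : m * c ^ 2 ≤ ∫ z in B, g z ^ 2 ∂ν := by nlinarith
  calc c ^ 2 = m⁻¹ * (m * c ^ 2) := by field_simp
    _ ≤ _ := mul_le_mul_of_nonneg_left h3 (inv_pos.2 hm).le

lemma hasSum_of_eq {a b : ℕ → ℝ} {s : ℝ} (h : ∀ i, a i = b i) (hb : HasSum b s) :
    HasSum a s := by
  rwa [funext h]

/-- Fatou-type comparison for series: if `A i r ≤ B i r` with `A i r → a i`, `B i r → b i`, and
the sums of the `B i r` converge to the sum of the `b i`, then a limit of the sums of the `A i r`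
cannot exceed the sum of the `a i`. -/
lemma limit_le_tsum {l : Filter ℝ} [l.NeBot] {A B : ℕ → ℝ → ℝ} {a b : ℕ → ℝ} {S T : ℝ → ℝ}
    {s : ℝ}
    (hAB : ∀ᶠ r in l, ∀ i, A i r ≤ B i r)
    (hS : ∀ᶠ r in l, HasSum (fun i => A i r) (S r))
    (hT : ∀ᶠ r in l, HasSum (fun i => B i r) (T r))
    (hA : ∀ i, Tendsto (A i) l (𝓝 (a i))) (hB : ∀ i, Tendsto (B i) l (𝓝 (b i)))
    (ha : Summable a) (hb : Summable b)
    (hSl : Tendsto S l (𝓝 s)) (hTl : Tendsto T l (𝓝 (∑' i, b i))) :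
    s ≤ ∑' i, a i := by
  have h1 : ∀ F : Finset ℕ, ∑ i ∈ F, (b i - a i) ≤ (∑' i, b i) - s := by
    intro F
    refine le_of_tendsto_of_tendsto (tendsto_finsetSum F fun i _ => (hB i).sub (hA i))
      (hTl.sub hSl) ?_
    filter_upwards [hAB, hS, hT] with r h1 h2 h3
    exact sum_le_hasSum F (fun i _ => sub_nonneg.2 (h1 i)) (h3.sub h2)
  have h2 : ∑' i, (b i - a i) ≤ (∑' i, b i) - s := (hb.sub ha).tsum_le_of_sum_le h1
  rw [hb.tsum_sub ha] at h2
  linarith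

/-! ### The centered kernel -/

lemma mdsKT_eq {X : Type*} [MetricSpace X] [MeasurableSpace X] (μ : Measure X)
    (x y : X) : mdsKT μ x y = -(1/2) * dist x y ^ 2 - (∫ y', mdsK x y' ∂μ)
    - (∫ y', mdsK y y' ∂μ) + ∫ x', ∫ y', mdsK x' y' ∂μ ∂μ := by
  have : (∫ x', mdsK x' y ∂μ) = ∫ y', mdsK y y' ∂μ := by simp only [mdsK, dist_comm y]
  rw [mdsKT, this, mdsK]

/-- Polarization: the centered kernel recovers the squared distance. -/
lemma mdsKT_polar {X : Type*} [MetricSpace X] [MeasurableSpace X] (μ : Measure X)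
    (x y : X) :
    mdsKT μ x x + mdsKT μ y y - 2 * mdsKT μ x y = dist x y ^ 2 := by
  simp only [mdsKT_eq, dist_self]
  ring

section Kernel

lemma dist_sq_le_add {X : Type*} [MetricSpace X] (x y z : X) : dist x y ^ 2 ≤ 2 * dist z x ^ 2 + 2 * dist z y ^ 2 := by
  have h := dist_triangle_left x y z
  nlinarith [sq_nonneg (dist z x - dist z y), dist_nonneg (x := x) (y := y),
    dist_nonneg (x := z) (y := x), dist_nonneg (x := z) (y := y)]

lemma memLp_dist_sq {X : Type*} [MetricSpace X] [SecondCountableTopology X]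
    [MeasurableSpace X] [BorelSpace X] (μ : Measure X) {z : X} (hz : Integrable (fun y => dist z y ^ 4) μ) :
    MemLp (fun y => dist z y ^ 2) 2 μ := by
  rw [memLp_two_iff_integrable_sq (by fun_prop)]
  simpa only [← pow_mul] using hz

variable {X : Type*} [MetricSpace X] [SecondCountableTopology X]
  [MeasurableSpace X] [BorelSpace X] (μ : Measure X) [IsProbabilityMeasure μ]

lemma integrable_mdsK {z : X} (hz : Integrable (fun y => dist z y ^ 4) μ) (x : X) :
    Integrable (fun y => mdsK x y) μ := by
  have h := (memLp_dist_sq μ hz).integrable (by norm_num)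
  refine ((h.const_mul 2).add (integrable_const (2 * dist z x ^ 2))).mono' ?_ ?_
  · unfold mdsK; fun_prop
  · filter_upwards with y
    have := dist_sq_le_add x y z
    simp only [mdsK, Real.norm_eq_abs, Pi.add_apply]
    rw [abs_le]
    constructor <;> nlinarith [sq_nonneg (dist x y)]

/-- The potential `x ↦ ∫ k(x,y) dμ(y)` is continuous. -/
lemma continuous_potential {z : X} (hz : Integrable (fun y => dist z y ^ 4) μ) :
    Continuous fun x => ∫ y, mdsK x y ∂μ := by
  rw [continuous_iff_continuousAt]
  intro x₀
  have h := (memLp_dist_sq μ hz).integrable (by norm_num)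
  refine continuousAt_of_dominated
    (bound := fun y => 2 * dist z y ^ 2 + 2 * (dist z x₀ + 1) ^ 2) ?_ ?_ ?_ ?_
  · exact Eventually.of_forall fun x => (integrable_mdsK μ hz x).1
  · filter_upwards [ball_mem_nhds x₀ one_pos] with x hx
    filter_upwards with y
    have h1 := dist_sq_le_add x y z
    have h2 : dist z x ≤ dist z x₀ + 1 := by
      have := dist_triangle z x₀ x
      rw [dist_comm x₀ x] at this
      linarith [mem_ball.1 hx]
    have h3 : dist z x ^ 2 ≤ (dist z x₀ + 1) ^ 2 := by gcongr
    simp only [mdsK, Real.norm_eq_abs]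
    rw [abs_le]
    constructor <;> nlinarith [sq_nonneg (dist x y)]
  · exact (h.const_mul 2).add (integrable_const _)
  · filter_upwards with y
    unfold mdsK; fun_prop

lemma continuous_mdsKT {z : X} (hz : Integrable (fun y => dist z y ^ 4) μ) :
    Continuous fun p : X × X => mdsKT μ p.1 p.2 := by
  simp only [mdsKT_eq]
  have h := continuous_potential μ hz
  have h1 := h.comp (continuous_fst (X := X) (Y := X))
  have h2 := h.comp (continuous_snd (X := X) (Y := X))
  simp only [Function.comp_def] at h1 h2
  fun_prop

/-- Quadratic growth of the kernel; with a finite fourth moment it makes `k_T` square integrable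
and dominates `k_T(x,·) v` locally uniformly in `x`. -/
lemma exists_mdsKT_bound {z : X} (hz : Integrable (fun y => dist z y ^ 4) μ) :
    ∃ C, ∀ x y, |mdsKT μ x y| ≤ 2 * dist z x ^ 2 + 2 * dist z y ^ 2 + C := by
  have h := (memLp_dist_sq μ hz).integrable (by norm_num)
  set m := ∫ y, dist z y ^ 2 ∂μ with hm
  have hA : ∀ x, |∫ y, mdsK x y ∂μ| ≤ dist z x ^ 2 + m := by
    intro x
    have : ‖∫ y, mdsK x y ∂μ‖ ≤ ∫ y, (dist z x ^ 2 + dist z y ^ 2) ∂μ := by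
      refine norm_integral_le_of_norm_le ((integrable_const _).add h) ?_
      filter_upwards with y
      have := dist_sq_le_add x y z
      simp only [mdsK, Real.norm_eq_abs]
      rw [abs_le]
      constructor <;> nlinarith [sq_nonneg (dist x y)]
    rw [integral_add (integrable_const _) h] at this
    simpa using this
  set c := ∫ x', ∫ y', mdsK x' y' ∂μ ∂μ
  refine ⟨2 * m + |c|, fun x y => ?_⟩
  rw [mdsKT_eq]
  have h0 := dist_sq_le_add x y z
  have h1 := abs_le.1 (hA x)
  have h2 := abs_le.1 (hA y)
  have h3 := abs_le.1 (le_refl |c|)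
  rw [abs_le]
  constructor <;> nlinarith [sq_nonneg (dist x y), sq_nonneg (dist z x), sq_nonneg (dist z y)]

lemma memLp_mdsKT {z : X} (hz : Integrable (fun y => dist z y ^ 4) μ) :
    MemLp (fun p : X × X => mdsKT μ p.1 p.2) 2 (μ.prod μ) := by
  obtain ⟨C, hC⟩ := exists_mdsKT_bound μ hz
  have h := memLp_dist_sq μ hz
  have h1 := (h.comp_fst μ).const_mul 2
  have h2 := (h.comp_snd μ).const_mul 2
  refine MemLp.mono' ((h1.add h2).add (memLp_const C))
    (continuous_mdsKT μ hz).aestronglyMeasurable ?_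
  filter_upwards with p
  exact hC p.1 p.2

/-- Integrating the centered kernel against an `L²` function gives a continuous function. -/
lemma continuous_integral_mdsKT_mul {z : X} (hz : Integrable (fun y => dist z y ^ 4) μ)
    {v : X → ℝ} (hv : MemLp v 2 μ) : Continuous fun x => ∫ y, mdsKT μ x y * v y ∂μ := by
  obtain ⟨C, hC⟩ := exists_mdsKT_bound μ hz
  have hK := continuous_mdsKT μ hz
  have h := memLp_dist_sq μ hz
  rw [continuous_iff_continuousAt]
  intro x₀
  refine continuousAt_of_dominated
    (bound := fun y => (2 * (dist z x₀ + 1) ^ 2 + 2 * dist z y ^ 2 + C) * |v y|) ?_ ?_ ?_ ?_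
  · refine Eventually.of_forall fun x => ?_
    have h1 : Continuous fun y => mdsKT μ x y := hK.comp (Continuous.prodMk_right x)
    exact h1.aestronglyMeasurable.mul hv.1
  · filter_upwards [ball_mem_nhds x₀ one_pos] with x hx
    filter_upwards with y
    have h2 : dist z x ≤ dist z x₀ + 1 := by
      have := dist_triangle z x₀ x
      rw [dist_comm x₀ x] at this
      linarith [mem_ball.1 hx]
    have h3 : dist z x ^ 2 ≤ (dist z x₀ + 1) ^ 2 := by gcongr
    rw [norm_mul, Real.norm_eq_abs, Real.norm_eq_abs]
    refine mul_le_mul_of_nonneg_right ?_ (abs_nonneg _)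
    linarith [hC x y]
  · have h1 : MemLp (fun _ : X => 2 * (dist z x₀ + 1) ^ 2) 2 μ := memLp_const _
    have h2 : MemLp (fun y => 2 * dist z y ^ 2) 2 μ := h.const_mul 2
    have h3 : MemLp (fun _ : X => C) 2 μ := memLp_const _
    have hg := (h1.add h2).add h3
    have hv' : MemLp (fun y => |v y|) 2 μ := hv.abs
    exact MemLp.integrable_mul hg hv'
  · filter_upwards with y
    have h1 := hK.comp (Continuous.prodMk_left y)
    exact (h1.mul continuous_const).continuousAt

end Kernel

/-! ### The spectral expansion -/

section Expansion

variable {X : Type*} [MetricSpace X] [SecondCountableTopology X]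
  [MeasurableSpace X] [BorelSpace X] (μ : Measure X) [IsProbabilityMeasure μ]
  {lam : ℕ → ℝ} {u : ℕ → X → ℝ}

lemma summable_mul_of_summable_sq {a b : ℕ → ℝ} (ha : Summable fun i => |lam i| * a i ^ 2)
    (hb : Summable fun i => |lam i| * b i ^ 2) : Summable fun i => lam i * a i * b i := by
  refine (ha.add hb).of_norm_bounded fun i => ?_
  rw [norm_mul, norm_mul, Real.norm_eq_abs, Real.norm_eq_abs, Real.norm_eq_abs]
  have h := abs_nonneg (lam i)
  rw [← sq_abs (a i), ← sq_abs (b i), ← mul_add, mul_assoc]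
  refine mul_le_mul_of_nonneg_left ?_ h
  nlinarith [sq_nonneg (|a i| - |b i|), sq_nonneg (|a i|), sq_nonneg (|b i|)]

lemma memLp_prod_mul {X : Type*} [MeasurableSpace X] (μ : Measure X)
    [IsProbabilityMeasure μ] {v w : X → ℝ} (hv : MemLp v 2 μ) (hw : MemLp w 2 μ) :
    MemLp (fun p : X × X => v p.1 * w p.2) 2 (μ.prod μ) := by
  have h1 : AEStronglyMeasurable (fun p : X × X => v p.1 * w p.2) (μ.prod μ) :=
    (hv.comp_fst μ).1.mul (hw.comp_snd μ).1
  rw [memLp_two_iff_integrable_sq h1]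
  simp_rw [mul_pow]
  exact hv.integrable_sq.mul_prod hw.integrable_sq

/-- An `L²`-limit and an almost everywhere limit of the same sequence agree almost everywhere,
by Fatou's lemma. -/
lemma ae_eq_of_tendsto_sq {Y : Type*} [MeasurableSpace Y] {ν : Measure Y}
    {K G : Y → ℝ} {S : ℕ → Y → ℝ} (hK : MemLp K 2 ν) (hS : ∀ n, MemLp (S n) 2 ν)
    (hlim : Tendsto (fun n => ∫ y, (K y - S n y) ^ 2 ∂ν) atTop (𝓝 0))
    (hG : ∀ᵐ y ∂ν, Tendsto (fun n => S n y) atTop (𝓝 (G y))) :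
    ∀ᵐ y ∂ν, K y = G y := by
  have h1 : ∀ n, ∫⁻ y, ENNReal.ofReal ((K y - S n y) ^ 2) ∂ν
      = ENNReal.ofReal (∫ y, (K y - S n y) ^ 2 ∂ν) := fun n =>
    (ofReal_integral_eq_lintegral_ofReal (hK.sub (hS n)).integrable_sq
      (Eventually.of_forall fun y => sq_nonneg _)).symm
  have hm : ∀ n, AEMeasurable (fun y => ENNReal.ofReal ((K y - S n y) ^ 2)) ν := fun n =>
    ((hK.1.aemeasurable.sub (hS n).1.aemeasurable).pow_const 2).ennreal_ofReal
  have h2 := lintegral_liminf_le' (u := atTop) hm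
  simp_rw [h1] at h2
  have h3 : Tendsto (fun n => ENNReal.ofReal (∫ y, (K y - S n y) ^ 2 ∂ν)) atTop (𝓝 0) := by
    simpa [Function.comp_def] using (ENNReal.continuous_ofReal.tendsto 0).comp hlim
  have hGm : AEMeasurable G ν :=
    aemeasurable_of_tendsto_metrizable_ae' (fun n => (hS n).1.aemeasurable) hG
  have h4 : ∫⁻ y, liminf (fun n => ENNReal.ofReal ((K y - S n y) ^ 2)) atTop ∂ν
      = ∫⁻ y, ENNReal.ofReal ((K y - G y) ^ 2) ∂ν := by
    refine lintegral_congr_ae ?_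
    filter_upwards [hG] with y hGy
    exact ((ENNReal.continuous_ofReal.tendsto _).comp
      ((tendsto_const_nhds.sub hGy).pow 2)).liminf_eq
  have hm' : AEMeasurable (fun y => ENNReal.ofReal ((K y - G y) ^ 2)) ν :=
    ((hK.1.aemeasurable.sub hGm).pow_const 2).ennreal_ofReal
  rw [h3.liminf_eq, nonpos_iff_eq_zero, h4, lintegral_eq_zero_iff' hm'] at h2
  filter_upwards [h2] with y hy
  exact sub_eq_zero.1 (pow_eq_zero_iff two_ne_zero |>.1
    (le_antisymm (ENNReal.ofReal_eq_zero.1 hy) (sq_nonneg _)))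

lemma summable_integral_norm_prod {X : Type*} [MeasurableSpace X] (μ : Measure X)
    [IsProbabilityMeasure μ] {lam : ℕ → ℝ} {u : ℕ → X → ℝ} (hu : ∀ i, MemLp (u i) 2 μ)
    (hnorm : ∀ i, ∫ x, u i x ^ 2 ∂μ = 1) (htrace : Summable fun i => |lam i|) :
    Summable fun i => ∫ p, ‖lam i * u i p.1 * u i p.2‖ ∂(μ.prod μ) := by
  refine htrace.of_nonneg_of_le (fun i => integral_nonneg fun p => norm_nonneg _) fun i => ?_
  have h1 : ∫ p, ‖lam i * u i p.1 * u i p.2‖ ∂(μ.prod μ) = |lam i| * (∫ x, |u i x| ∂μ) ^ 2 := by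
    simp_rw [norm_mul, Real.norm_eq_abs, mul_assoc]
    rw [integral_const_mul, integral_prod_mul (fun x => |u i x|) (fun x => |u i x|), sq]
  have h2 := sq_avg_le μ (fun x => |u i x|) (hu i).abs Set.univ (by simp)
  simp only [measure_univ, ENNReal.toReal_one, inv_one, one_mul, Measure.restrict_univ, sq_abs,
    hnorm] at h2
  rw [h1]
  exact mul_le_of_le_one_right (abs_nonneg _) h2

/-- At a Lebesgue point of `f = ∑ |λᵢ| uᵢ²` where the series converges, the diagonal value of the
kernel is bounded by the diagonal value of its spectral series. -/
lemma mdsKT_diag_le {z : X} (hz : Integrable (fun y => dist z y ^ 4) μ)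
    (hu : ∀ i, MemLp (u i) 2 μ) (hnorm : ∀ i, ∫ x, u i x ^ 2 ∂μ = 1)
    (hcont : ∀ i, lam i ≠ 0 → Continuous (u i)) (htrace : Summable fun i => |lam i|)
    (hK : ∀ᵐ p ∂(μ.prod μ), mdsKT μ p.1 p.2 = ∑' i, lam i * u i p.1 * u i p.2)
    {x : X} (hx : IsLebPoint μ (fun x => ∑' i, |lam i| * (u i x) ^ 2) x)
    (hsx : Summable fun i => |lam i| * (u i x) ^ 2) :
    mdsKT μ x x ≤ ∑' i, lam i * u i x * u i x := by
  obtain ⟨hpos, hleb⟩ := hx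
  have hpos' : ∀ r > 0, 0 < (μ (ball x r)).toReal := fun r hr =>
    ENNReal.toReal_pos (hpos r hr).ne' (measure_ne_top _ _)
  have hball : ∀ r, ball (x, x) r = ball x r ×ˢ ball x r := fun r => (ball_prod_same x x r).symm
  have hmeas2 : ∀ r, ((μ.prod μ) (ball (x, x) r)).toReal = (μ (ball x r)).toReal ^ 2 := by
    intro r
    rw [hball, Measure.prod_prod, ENNReal.toReal_mul, sq]
  -- averages of the kernel over `B_r(x) × B_r(x)` converge to the diagonal value
  have hSl := tendsto_ball_avg (μ.prod μ) (fun p => mdsKT μ p.1 p.2) (continuous_mdsKT μ hz)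
    ((memLp_mdsKT μ hz).integrable (by norm_num)) (x, x) (by
      intro r hr
      rw [hball, Measure.prod_prod]
      exact ENNReal.mul_pos (hpos r hr).ne' (hpos r hr).ne')
  have hint : ∀ i, Integrable (fun p : X × X => lam i * u i p.1 * u i p.2) (μ.prod μ) := by
    intro i
    simp_rw [mul_assoc]
    exact ((memLp_prod_mul μ (hu i) (hu i)).integrable (by norm_num)).const_mul _
  refine limit_le_tsum
    (A := fun i r => lam i * ((μ (ball x r)).toReal⁻¹ * ∫ y in ball x r, u i y ∂μ) ^ 2)
    (B := fun i r => |lam i| * ((μ (ball x r)).toReal⁻¹ * ∫ y in ball x r, u i y ^ 2 ∂μ))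
    (b := fun i => |lam i| * (u i x) ^ 2) ?_ ?_ ?_ ?_ ?_
    (summable_mul_of_summable_sq hsx hsx) hsx hSl hleb
  · filter_upwards [self_mem_nhdsWithin] with r hr i
    have h1 := sq_avg_le μ (u i) (hu i) (ball x r) (hpos r hr)
    exact mul_le_mul (le_abs_self _) h1 (sq_nonneg _) (abs_nonneg _)
  · filter_upwards [self_mem_nhdsWithin] with r hr
    have h1 := hasSum_integral_of_summable_integral_norm
      (μ := (μ.prod μ).restrict (ball (x, x) r))
      (F := fun i (p : X × X) => lam i * u i p.1 * u i p.2)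
      (fun i => (hint i).integrableOn)
      ((summable_integral_norm_prod μ hu hnorm htrace).of_nonneg_of_le
        (fun i => integral_nonneg fun p => norm_nonneg _)
        fun i => setIntegral_le_integral (hint i).norm
          (Eventually.of_forall fun p => norm_nonneg _))
    have h2 : ∫ p in ball (x, x) r, mdsKT μ p.1 p.2 ∂(μ.prod μ)
        = ∫ p in ball (x, x) r, ∑' i, lam i * u i p.1 * u i p.2 ∂(μ.prod μ) :=
      integral_congr_ae (ae_restrict_of_ae hK)
    rw [h2]
    refine hasSum_of_eq (fun i => ?_) (h1.mul_left ((μ.prod μ) (ball (x, x) r)).toReal⁻¹)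
    simp_rw [mul_assoc]
    rw [integral_const_mul, hmeas2, hball, setIntegral_prod_mul]
    have := (hpos' r hr).ne'
    field_simp
  · filter_upwards with r
    have h0 : ∀ i, Integrable (fun y => |lam i| * u i y ^ 2) μ := fun i =>
      (hu i).integrable_sq.const_mul _
    have h1 := hasSum_integral_of_summable_integral_norm
      (μ := μ.restrict (ball x r)) (F := fun i y => |lam i| * u i y ^ 2)
      (fun i => (h0 i).integrableOn) (by
        refine htrace.of_nonneg_of_le (fun i => integral_nonneg fun p => norm_nonneg _)
          fun i => ?_
        refine (setIntegral_le_integral (h0 i).norm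
          (Eventually.of_forall fun p => norm_nonneg _)).trans ?_
        simp [integral_const_mul, hnorm])
    refine hasSum_of_eq (fun i => ?_) (h1.mul_left (μ (ball x r)).toReal⁻¹)
    rw [integral_const_mul]
    ring
  · intro i
    by_cases hi : lam i = 0
    · simp [hi]
    have h1 := tendsto_ball_avg μ (u i) (hcont i hi) ((hu i).integrable (by norm_num)) x hpos
    have h2 := (h1.pow 2).const_mul (lam i)
    rwa [sq (u i x), ← mul_assoc] at h2
  · intro i
    by_cases hi : lam i = 0
    · simp [hi]
    exact (tendsto_ball_avg μ (fun y => u i y ^ 2) ((hcont i hi).pow 2) (hu i).integrable_sq x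
      hpos).const_mul _

end Expansion

/-- Corollary 4.4 (first part): under trace-class and a.e. Lebesgue point assumptions,
for `μ ⊗ μ`-a.e. `(x,y)` one has `Σⱼ λⱼ⁺ (uⱼ⁺(x) - uⱼ⁺(y))² ≥ d(x,y)²`, the left-hand side
being understood as an extended-real sum; i.e. `‖M(x) - M(y)‖²_{ℓ²} ≥ d(x,y)²` a.e. -/
theorem mds_map_expands_ae
    {X : Type*} [MetricSpace X] [CompleteSpace X] [SecondCountableTopology X]
    [MeasurableSpace X] [BorelSpace X]
    (μ : Measure X) [IsProbabilityMeasure μ]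
    (hmom : ∃ z : X, Integrable (fun y => dist z y ^ 4) μ)
    (lam : ℕ → ℝ) (u : ℕ → X → ℝ)
    (hmeas : ∀ i, Measurable (u i))
    (heig : ∀ i, lam i ≠ 0 → ∀ x, lam i * u i x = ∫ y, mdsKT μ x y * u i y ∂μ)
    (horth : ∀ i j, (∫ x, u i x * u j x ∂μ) = if i = j then 1 else 0)
    (htrace : Summable fun i => |lam i|)
    (hbasis : Tendsto
      (fun n => ∫ p, (mdsKT μ p.1 p.2 - ∑ i ∈ Finset.range n, lam i * u i p.1 * u i p.2) ^ 2
        ∂(μ.prod μ)) atTop (𝓝 0))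
    (f : X → ℝ) (hf : f = fun x => ∑' i, |lam i| * (u i x) ^ 2)
    (hfint : Integrable f μ)
    (hleb : ∀ᵐ x ∂μ, IsLebPoint μ f x) :
    ∀ᵐ p ∂(μ.prod μ),
      ENNReal.ofReal (dist p.1 p.2 ^ 2) ≤
        ∑' i, ENNReal.ofReal (max (lam i) 0 * (u i p.1 - u i p.2) ^ 2) := by
  obtain ⟨z, hz⟩ := hmom
  have hnorm : ∀ i, ∫ x, u i x ^ 2 ∂μ = 1 := fun i => by
    simpa [sq] using horth i i
  have hu : ∀ i, MemLp (u i) 2 μ := by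
    intro i
    rw [memLp_two_iff_integrable_sq (hmeas i).aestronglyMeasurable]
    -- a non-integrable square would have (junk) integral `0`, not `1`
    by_contra h
    have := hnorm i
    rw [integral_undef h] at this
    exact zero_ne_one this
  have hcont : ∀ i, lam i ≠ 0 → Continuous (u i) := by
    intro i hi
    have h1 : u i = fun x => (lam i)⁻¹ * ∫ y, mdsKT μ x y * u i y ∂μ := by
      funext x
      rw [← heig i hi x]
      field_simp
    rw [h1]
    exact continuous_const.mul (continuous_integral_mdsKT_mul μ hz (hu i))
  have hsum : ∀ᵐ x ∂μ, Summable fun i => |lam i| * (u i x) ^ 2 := by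
    refine ae_summable_of_summable_integral_norm
      (fun i => (hu i).integrable_sq.const_mul _) ?_
    simpa [integral_const_mul, hnorm] using htrace
  have hfst : ∀ᵐ p ∂(μ.prod μ), Summable fun i => |lam i| * (u i p.1) ^ 2 :=
    Measure.quasiMeasurePreserving_fst.ae hsum
  have hsnd : ∀ᵐ p ∂(μ.prod μ), Summable fun i => |lam i| * (u i p.2) ^ 2 :=
    Measure.quasiMeasurePreserving_snd.ae hsum
  have hK : ∀ᵐ p ∂(μ.prod μ), mdsKT μ p.1 p.2 = ∑' i, lam i * u i p.1 * u i p.2 := by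
    refine ae_eq_of_tendsto_sq (memLp_mdsKT μ hz) (fun n => ?_) hbasis ?_
    · refine memLp_finsetSum _ fun i _ => ?_
      simp_rw [mul_assoc]
      exact (memLp_prod_mul μ (hu i) (hu i)).const_mul _
    · filter_upwards [hfst, hsnd] with p h1 h2
      exact (summable_mul_of_summable_sq h1 h2).hasSum.tendsto_sum_nat
  have hdiag : ∀ᵐ x ∂μ, mdsKT μ x x ≤ ∑' i, lam i * u i x * u i x := by
    filter_upwards [hleb, hsum] with x h1 h2
    exact mdsKT_diag_le μ hz hu hnorm hcont htrace hK (hf ▸ h1) h2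
  filter_upwards [hfst, hsnd, hK, Measure.quasiMeasurePreserving_fst.ae hdiag,
    Measure.quasiMeasurePreserving_snd.ae hdiag] with p h1 h2 h3 h4 h5
  have s11 := summable_mul_of_summable_sq h1 h1
  have s22 := summable_mul_of_summable_sq h2 h2
  have s12 := summable_mul_of_summable_sq h1 h2
  have hs : HasSum (fun i => lam i * (u i p.1 - u i p.2) ^ 2)
      ((∑' i, lam i * u i p.1 * u i p.1) + (∑' i, lam i * u i p.2 * u i p.2)
        - 2 * ∑' i, lam i * u i p.1 * u i p.2) := by
    refine hasSum_of_eq (fun i => ?_)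
      ((s11.hasSum.add s22.hasSum).sub (s12.hasSum.mul_left 2))
    ring
  have hle : ∀ i, |max (lam i) 0| ≤ |lam i| := fun i => by
    rw [abs_of_nonneg (le_max_right _ _)]
    exact max_le (le_abs_self _) (abs_nonneg _)
  have hplus : Summable fun i => max (lam i) 0 * (u i p.1 - u i p.2) ^ 2 := by
    refine ((h1.mul_left 2).add (h2.mul_left 2)).of_nonneg_of_le
      (fun i => mul_nonneg (le_max_right _ _) (sq_nonneg _)) fun i => ?_
    have h6 := (le_abs_self _).trans (hle i)
    have h7 : (u i p.1 - u i p.2) ^ 2 ≤ 2 * u i p.1 ^ 2 + 2 * u i p.2 ^ 2 := by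
      nlinarith [sq_nonneg (u i p.1 + u i p.2)]
    calc _ ≤ |lam i| * (2 * u i p.1 ^ 2 + 2 * u i p.2 ^ 2) :=
          mul_le_mul h6 h7 (sq_nonneg _) (abs_nonneg _)
      _ = _ := by ring
  rw [← ENNReal.ofReal_tsum_of_nonneg
    (fun i => mul_nonneg (le_max_right _ _) (sq_nonneg _)) hplus]
  refine ENNReal.ofReal_le_ofReal ?_
  have h6 : ∑' i, lam i * (u i p.1 - u i p.2) ^ 2
      ≤ ∑' i, max (lam i) 0 * (u i p.1 - u i p.2) ^ 2 :=
    hs.summable.tsum_le_tsum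
      (fun i => mul_le_mul_of_nonneg_right (le_max_left _ _) (sq_nonneg _)) hplus
  rw [hs.tsum_eq] at h6
  linarith [mdsKT_polar μ p.1 p.2]
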